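/- Let D be a dictionary in a real Hilbert space X whose symmetric convex hull co(D) is compact, and let f ∈ X with ‖f‖_{L1(D)} < ∞. Then the best n-term approximation error satisfies E_n(f,D) ≤ ((n! V_n)^{1/n} / √n) · ‖f‖_{L1(D)} · ε_n(co(D)) for all n ≥ 1. -/

import Mathlib

open scoped RealInnerProductSpace

/-- Dyadic entropy number: infimum of all `ε > 0` such that `K` is covered by `2^n`
balls of radius `ε`. -/
noncomputable def entropyNumber {X : Type*} [NormedAddCommGroup X] (n : ℕ) (K : Set X) : ℝ :=
  sInf {ε : ℝ | 0 < ε ∧ ∃ c : Fin (2 ^ n) → X, K ⊆ ⋃ i, Metric.closedBall (c i) ε}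

/-- Symmetric (absolutely) convex hull: closure of the set of finite sums `∑ cᵢ gᵢ`
with `gᵢ ∈ K` and `∑ |cᵢ| ≤ 1`. -/
noncomputable def symConvexHull {X : Type*} [NormedAddCommGroup X] [NormedSpace ℝ X]
    (K : Set X) : Set X :=
  closure {x : X | ∃ (m : ℕ) (c : Fin m → ℝ) (g : Fin m → X),
    (∀ i, g i ∈ K) ∧ (∑ i, |c i|) ≤ 1 ∧ x = ∑ i, c i • g i}

/-- Volume of the unit Euclidean ball in `ℝⁿ`. -/
noncomputable def unitBallVol (n : ℕ) : ℝ :=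
  Real.pi ^ ((n : ℝ) / 2) / Real.Gamma ((n : ℝ) / 2 + 1)

/-- Span of the first `n` terms of a sequence. -/
noncomputable def spanFirst {X : Type*} [NormedAddCommGroup X] [NormedSpace ℝ X]
    (f : ℕ → X) (n : ℕ) : Submodule ℝ X :=
  Submodule.span ℝ (f '' {i | i < n})

/-- The weak greedy algorithm with parameter `γ`: `f n` (the `(n+1)`-st iterate) lies in `K`
and its distance to the span of the previous iterates is at least `γ` times that of any
other element of `K`. -/
def IsWeakGreedy {X : Type*} [NormedAddCommGroup X] [NormedSpace ℝ X]
    (γ : ℝ) (K : Set X) (f : ℕ → X) : Prop :=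
  ∀ n : ℕ, f n ∈ K ∧ ∀ g ∈ K,
    γ * Metric.infDist g (spanFirst f n : Set X) ≤ Metric.infDist (f n) (spanFirst f n : Set X)

/-- The greedy error `σ_n(K) = sup_{f ∈ K} dist(f, span{f_1,…,f_n})`. -/
noncomputable def greedyError {X : Type*} [NormedAddCommGroup X] [NormedSpace ℝ X]
    (K : Set X) (f : ℕ → X) (n : ℕ) : ℝ :=
  sSup ((fun g => Metric.infDist g (spanFirst f n : Set X)) '' K)

/-- Kolmogorov `n`-width. -/
noncomputable def kolmogorovWidth {X : Type*} [NormedAddCommGroup X] [NormedSpace ℝ X]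
    (n : ℕ) (K : Set X) : ℝ :=
  sInf {d : ℝ | ∃ Y : Submodule ℝ X, FiniteDimensional ℝ Y ∧ Module.finrank ℝ Y ≤ n ∧
    d = sSup ((fun g => Metric.infDist g (Y : Set X)) '' K)}

/-- `f` admits an `ℓ¹` representation over the dictionary `D`. -/
def HasL1Rep {X : Type*} [NormedAddCommGroup X] [NormedSpace ℝ X] (D : Set X) (f : X) : Prop :=
  ∃ (c : ℕ → ℝ) (g : ℕ → X), (∀ i, g i ∈ D) ∧ Summable (fun i => |c i|) ∧
    HasSum (fun i => c i • g i) f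

/-- The variation norm `‖f‖_{L₁(D)}`. -/
noncomputable def varNorm {X : Type*} [NormedAddCommGroup X] [NormedSpace ℝ X]
    (D : Set X) (f : X) : ℝ :=
  sInf {t : ℝ | ∃ (c : ℕ → ℝ) (g : ℕ → X), (∀ i, g i ∈ D) ∧ Summable (fun i => |c i|) ∧
    HasSum (fun i => c i • g i) f ∧ t = ∑' i, |c i|}

/-- The orthogonal greedy algorithm with target `f`: `fa 0 = 0`; at each step `g n ∈ D`
maximizes `|⟨g, f - fa n⟩|` over `D`, and `fa (n+1)` is the orthogonal projection of `f`
onto `span{g 0, …, g n}`. -/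
def IsOGA {X : Type*} [NormedAddCommGroup X] [InnerProductSpace ℝ X]
    (D : Set X) (f : X) (g fa : ℕ → X) : Prop :=
  fa 0 = 0 ∧ ∀ n : ℕ,
    g n ∈ D ∧ (∀ h ∈ D, |⟪h, f - fa n⟫| ≤ |⟪g n, f - fa n⟫|) ∧
    fa (n + 1) ∈ Submodule.span ℝ (g '' {i | i ≤ n}) ∧
    ∀ w ∈ Submodule.span ℝ (g '' {i | i ≤ n}), ⟪f - fa (n + 1), w⟫ = 0

/-- Best `n`-term approximation error `E_n(f, D)`. -/
noncomputable def bestNTermError {X : Type*} [NormedAddCommGroup X] [NormedSpace ℝ X]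
    (D : Set X) (n : ℕ) (f : X) : ℝ :=
  sInf {r : ℝ | ∃ (c : Fin n → ℝ) (g : Fin n → X), (∀ i, g i ∈ D) ∧ r = ‖f - ∑ i, c i • g i‖}

/-- The K-functional `K(t, g)` between `X` and `L₁(D)`. -/
noncomputable def Kfunctional {X : Type*} [NormedAddCommGroup X] [NormedSpace ℝ X]
    (D : Set X) (t : ℝ) (gg : X) : ℝ :=
  sInf {s : ℝ | ∃ h : X, HasL1Rep D h ∧ s = ‖gg - h‖ + t * varNorm D h}

/-- The interpolation norm `‖g‖_θ = sup_{t > 0} t^{-θ} K(t, g)`. -/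
noncomputable def interpNorm {X : Type*} [NormedAddCommGroup X] [NormedSpace ℝ X]
    (D : Set X) (θ : ℝ) (gg : X) : ℝ :=
  sSup ((fun t => t ^ (-θ) * Kfunctional D t gg) '' Set.Ioi (0 : ℝ))

open MeasureTheory in
/-- The volume of the unit `ℓ¹` ball (cross-polytope) in `ℝⁿ`. -/
theorem volume_crossPolytope {n : ℕ} (hn : 1 ≤ n) :
    volume {x : Fin n → ℝ | ∑ i, |x i| ≤ 1} = ENNReal.ofReal (2 ^ n / n.factorial) := by
  have : Nonempty (Fin n) := ⟨⟨0, hn⟩⟩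
  have h := volume_sum_rpow_le (Fin n) (p := 1) le_rfl 1
  simpa [Real.Gamma_nat_eq_factorial, one_add_one_eq_two] using h

theorem unitBallVol_eq (n : ℕ) :
    unitBallVol n = Real.sqrt Real.pi ^ n / Real.Gamma ((n : ℝ) / 2 + 1) := by
  rw [unitBallVol, Real.sqrt_eq_rpow, ← Real.rpow_natCast, ← Real.rpow_mul Real.pi_pos.le]
  ring_nf

theorem unitBallVol_pos (n : ℕ) : 0 < unitBallVol n := by
  have : 0 < Real.Gamma ((n : ℝ) / 2 + 1) := Real.Gamma_pos_of_pos (by positivity)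
  have := Real.pi_pos
  unfold unitBallVol
  positivity

/-- Elements of `D` span a cross-polytope inside the symmetric convex hull of `D`. -/
theorem sum_smul_mem_symConvexHull {X : Type*} [NormedAddCommGroup X] [NormedSpace ℝ X]
    {D : Set X} {n : ℕ} {c : Fin n → ℝ} {g : Fin n → X} (hg : ∀ i, g i ∈ D)
    (hc : ∑ i, |c i| ≤ 1) : ∑ i, c i • g i ∈ symConvexHull D :=
  subset_closure ⟨n, c, g, hg, hc, rfl⟩

open MeasureTheory in
/-- Comparing the volume of a projected cross-polytope with that of a covering by balls. -/
theorem abs_det_inner_le_of_cover {X : Type*} [NormedAddCommGroup X] [InnerProductSpace ℝ X]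
    {D : Set X} {n : ℕ} (hn : 1 ≤ n) {e g : Fin n → X} (he : Orthonormal ℝ e)
    (hg : ∀ i, g i ∈ D) {ε : ℝ} (hε : 0 < ε) {c : Fin (2 ^ n) → X}
    (hcov : symConvexHull D ⊆ ⋃ i, Metric.closedBall (c i) ε) :
    |(Matrix.of fun i j => ⟪e i, g j⟫).det| ≤ n.factorial * unitBallVol n * ε ^ n := by
  have : Nonempty (Fin n) := ⟨⟨0, hn⟩⟩
  set M : Matrix (Fin n) (Fin n) ℝ := Matrix.of fun i j => ⟪e i, g j⟫ with hM
  let B : Fin (2 ^ n) → Set (Fin n → ℝ) := fun k =>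
    WithLp.toLp 2 ⁻¹' Metric.closedBall (WithLp.toLp 2 fun i => ⟪e i, c k⟫) ε
  have hsub : Matrix.toLin' M '' {x | ∑ i, |x i| ≤ 1} ⊆ ⋃ k, B k := by
    rintro _ ⟨x, hx, rfl⟩
    obtain ⟨k, hk⟩ := Set.mem_iUnion.1 (hcov (sum_smul_mem_symConvexHull hg hx))
    refine Set.mem_iUnion.2 ⟨k, ?_⟩
    rw [mem_closedBall_iff_norm] at hk
    have hcoord : ∀ i, Matrix.toLin' M x i - ⟪e i, c k⟫ = ⟪e i, ∑ j, x j • g j - c k⟫ := by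
      intro i
      simp [inner_sub_right, inner_sum, inner_smul_right, Matrix.mulVec, dotProduct, hM, mul_comm]
    change _ ∈ Metric.closedBall _ _
    rw [mem_closedBall_iff_norm, ← WithLp.toLp_sub, EuclideanSpace.norm_eq]
    refine Real.sqrt_le_iff.2 ⟨hε.le, ?_⟩
    calc ∑ i, ‖(Matrix.toLin' M x - fun i => ⟪e i, c k⟫) i‖ ^ 2
        = ∑ i, ‖⟪e i, ∑ j, x j • g j - c k⟫‖ ^ 2 := by
          simp_rw [Pi.sub_apply, hcoord]
      _ ≤ ‖∑ j, x j • g j - c k‖ ^ 2 := he.sum_inner_products_le _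
      _ ≤ ε ^ 2 := by gcongr
  have hB : ∀ k, volume (B k) = ENNReal.ofReal (ε ^ n * unitBallVol n) := by
    intro k
    rw [(PiLp.volume_preserving_toLp (Fin n)).measure_preimage
      Metric.isClosed_closedBall.measurableSet.nullMeasurableSet,
      EuclideanSpace.volume_closedBall, unitBallVol_eq, ENNReal.ofReal_mul (by positivity),
      ENNReal.ofReal_pow hε.le, Fintype.card_fin]
  have hvol := (measure_mono (μ := volume) hsub).trans (measure_iUnion_le _)
  rw [Measure.addHaar_image_linearMap, LinearMap.det_toLin', volume_crossPolytope hn] at hvol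
  have hV := unitBallVol_pos n
  simp only [hB, tsum_fintype, Finset.sum_const, Finset.card_univ, Fintype.card_fin] at hvol
  rw [← ENNReal.ofReal_mul (abs_nonneg _), ← ENNReal.ofReal_nsmul,
    ENNReal.ofReal_le_ofReal_iff (by positivity), nsmul_eq_mul] at hvol
  push_cast at hvol
  have hfac : (0 : ℝ) < n.factorial := by exact_mod_cast n.factorial_pos
  rw [mul_div_assoc', div_le_iff₀ hfac] at hvol
  have h2 : (0 : ℝ) < 2 ^ n := by positivity
  refine le_of_mul_le_mul_right ?_ h2
  linarith

section SpanFirst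

variable {X : Type*} [NormedAddCommGroup X] [InnerProductSpace ℝ X]

instance finiteDimensional_spanFirst (g : ℕ → X) (k : ℕ) : FiniteDimensional ℝ (spanFirst g k) :=
  FiniteDimensional.span_of_finite ℝ ((Set.finite_lt_nat k).image g)

theorem spanFirst_mono (g : ℕ → X) : Monotone (spanFirst g) := fun _ _ h =>
  Submodule.span_mono (Set.image_mono fun _ hi => lt_of_lt_of_le hi h)

theorem mem_spanFirst (g : ℕ → X) {i k : ℕ} (h : i < k) : g i ∈ spanFirst g k :=
  Submodule.subset_span ⟨i, h, rfl⟩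

/-- The component of `x` orthogonal to the first `k` terms of `g`. -/
noncomputable def spanResidual (g : ℕ → X) (k : ℕ) (x : X) : X :=
  x - (spanFirst g k).starProjection x

theorem inner_spanResidual_eq_zero (g : ℕ → X) (k : ℕ) (x : X) {w : X}
    (hw : w ∈ spanFirst g k) : ⟪spanResidual g k x, w⟫ = 0 :=
  Submodule.starProjection_inner_eq_zero x w hw

theorem inner_spanResidual_right (g : ℕ → X) (k : ℕ) (x y : X) :
    ⟪spanResidual g k x, spanResidual g k y⟫ = ⟪spanResidual g k x, y⟫ := by
  conv_lhs => rw [spanResidual.eq_1 g k y, inner_sub_right]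
  rw [inner_spanResidual_eq_zero g k x (Submodule.starProjection_apply_mem _ _), sub_zero]

theorem norm_spanResidual_le (g : ℕ → X) (k : ℕ) (x : X) {w : X} (hw : w ∈ spanFirst g k) :
    ‖spanResidual g k x‖ ≤ ‖x - w‖ := by
  rw [spanResidual, Submodule.starProjection_minimal]
  exact ciInf_le ⟨0, by rintro _ ⟨y, rfl⟩; positivity⟩ (⟨w, hw⟩ : spanFirst g k)

theorem spanResidual_mem_spanFirst_succ (g : ℕ → X) (k : ℕ) :
    spanResidual g k (g k) ∈ spanFirst g (k + 1) :=
  Submodule.sub_mem _ (mem_spanFirst g k.lt_succ_self)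
    (spanFirst_mono g k.le_succ (Submodule.starProjection_apply_mem _ _))

/-- Error reduction in one step of orthogonal projection. -/
theorem norm_spanResidual_succ_sq_le (g : ℕ → X) (k : ℕ) (x : X)
    (hd : spanResidual g k (g k) ≠ 0) :
    ‖spanResidual g (k + 1) x‖ ^ 2 ≤ ‖spanResidual g k x‖ ^ 2 -
      ⟪spanResidual g k x, g k⟫ ^ 2 / ‖spanResidual g k (g k)‖ ^ 2 := by
  set r := spanResidual g k x
  set u := spanResidual g k (g k)
  have hu : ‖u‖ ≠ 0 := norm_ne_zero_iff.2 hd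
  have hru : ⟪r, u⟫ = ⟪r, g k⟫ := inner_spanResidual_right g k x (g k)
  set α := ⟪r, g k⟫ / ‖u‖ ^ 2 with hα
  have hmem : (spanFirst g k).starProjection x + α • u ∈ spanFirst g (k + 1) :=
    Submodule.add_mem _ (spanFirst_mono g k.le_succ (Submodule.starProjection_apply_mem _ _))
      (Submodule.smul_mem _ _ (spanResidual_mem_spanFirst_succ g k))
  have h := norm_spanResidual_le g (k + 1) x hmem
  rw [← sub_sub] at h
  change _ ≤ ‖r - α • u‖ at h
  calc ‖spanResidual g (k + 1) x‖ ^ 2 ≤ ‖r - α • u‖ ^ 2 := by gcongr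
    _ = ‖r‖ ^ 2 - ⟪r, g k⟫ ^ 2 / ‖u‖ ^ 2 := by
      rw [norm_sub_sq_real, inner_smul_right, hru, norm_smul, mul_pow, Real.norm_eq_abs, sq_abs, hα]
      field_simp
      ring

/-- Normalizing the residuals of `g` yields an orthonormal family. -/
theorem orthonormal_normalize_spanResidual (g : ℕ → X) (n : ℕ)
    (hd : ∀ k < n, spanResidual g k (g k) ≠ 0) :
    Orthonormal ℝ fun i : Fin n =>
      ‖spanResidual g i (g i)‖⁻¹ • spanResidual g i (g i) := by
  have key : ∀ i j : ℕ, i < j → ⟪spanResidual g j (g j), spanResidual g i (g i)⟫ = 0 :=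
    fun i j hij => inner_spanResidual_eq_zero g j _
      (spanFirst_mono g hij (spanResidual_mem_spanFirst_succ g i))
  refine ⟨fun i => ?_, fun i j hij => ?_⟩
  · exact norm_smul_inv_norm (𝕜 := ℝ) (hd i i.2)
  · simp only [inner_smul_left, inner_smul_right]
    rcases lt_or_gt_of_ne (Fin.val_ne_of_ne hij) with h | h
    · rw [real_inner_comm, key _ _ h]; simp
    · rw [key _ _ h]; simp

theorem prod_norm_spanResidual_le_of_cover {D : Set X} {n : ℕ} (hn : 1 ≤ n) {g : ℕ → X}
    (hg : ∀ i, g i ∈ D) (hd : ∀ k < n, spanResidual g k (g k) ≠ 0) {ε : ℝ} (hε : 0 < ε)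
    {c : Fin (2 ^ n) → X} (hcov : symConvexHull D ⊆ ⋃ i, Metric.closedBall (c i) ε) :
    ∏ k ∈ Finset.range n, ‖spanResidual g k (g k)‖ ≤ n.factorial * unitBallVol n * ε ^ n := by
  have h := abs_det_inner_le_of_cover (g := fun i : Fin n => g i) hn
    (orthonormal_normalize_spanResidual g n hd) (fun i => hg i) hε hcov
  rw [Matrix.det_of_isUpperTriangular] at h
  · refine le_trans (le_of_eq ?_) ((le_abs_self _).trans h)
    rw [Finset.prod_range]
    refine Finset.prod_congr rfl fun i _ => ?_
    have hi : ‖spanResidual g i (g i)‖ ≠ 0 := norm_ne_zero_iff.2 (hd i i.2)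
    rw [Matrix.of_apply, real_inner_smul_left, ← inner_spanResidual_right,
      real_inner_self_eq_norm_sq]
    field_simp
  · intro i j hij
    rw [Matrix.of_apply, real_inner_smul_left,
      inner_spanResidual_eq_zero g i _ (mem_spanFirst g (show (j : ℕ) < i from hij)), mul_zero]

/-- The residuals of a greedy sequence decay at a rate governed by the residuals of the
sequence itself. -/
theorem sum_inv_sq_le_of_greedy {g : ℕ → X} {f : X} {t : ℝ}
    (hgr : ∀ k, ‖spanResidual g k f‖ ^ 2 ≤ t * |⟪spanResidual g k f, g k⟫|)
    (n : ℕ) (hr : spanResidual g n f ≠ 0) :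
    (∀ k < n, spanResidual g k (g k) ≠ 0) ∧
      ∑ k ∈ Finset.range n, (‖spanResidual g k (g k)‖ ^ 2)⁻¹ ≤ t ^ 2 / ‖spanResidual g n f‖ ^ 2 := by
  induction n with
  | zero => simp; positivity
  | succ n ih =>
    have hr' : 0 < ‖spanResidual g (n + 1) f‖ := norm_pos_iff.2 hr
    have hle : ‖spanResidual g (n + 1) f‖ ≤ ‖spanResidual g n f‖ :=
      norm_spanResidual_le g (n + 1) f
        (spanFirst_mono g n.le_succ (Submodule.starProjection_apply_mem _ _))
    have hrn : 0 < ‖spanResidual g n f‖ := hr'.trans_le hle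
    obtain ⟨hd, hs⟩ := ih (norm_pos_iff.1 hrn)
    have hgn := hgr n
    have hu : spanResidual g n (g n) ≠ 0 := by
      intro h0
      rw [← inner_spanResidual_right, h0, inner_zero_right, abs_zero, mul_zero] at hgn
      exact absurd hgn (not_le.2 (by positivity))
    refine ⟨fun k hk => ?_, ?_⟩
    · rcases Nat.lt_succ_iff_lt_or_eq.1 hk with h | rfl
      exacts [hd k h, hu]
    have hstep := norm_spanResidual_succ_sq_le g n f hu
    have hu' : 0 < ‖spanResidual g n (g n)‖ := norm_pos_iff.2 hu
    rw [Finset.sum_range_succ]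
    refine (add_le_add_left hs _).trans ?_
    have hsq : (‖spanResidual g n f‖ ^ 2) ^ 2 ≤ t ^ 2 * ⟪spanResidual g n f, g n⟫ ^ 2 := by
      rw [← sq_abs ⟪spanResidual g n f, g n⟫, ← mul_pow]
      gcongr
    set a := ‖spanResidual g n f‖ ^ 2 with ha
    set b := ‖spanResidual g (n + 1) f‖ ^ 2 with hb
    set d := ‖spanResidual g n (g n)‖ ^ 2 with hd
    set p := ⟪spanResidual g n f, g n⟫ ^ 2
    have ha0 : 0 < a := by positivity
    have hb0 : 0 < b := by positivity
    have hd0 : 0 < d := by positivity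
    have hba : b ≤ a := by rw [ha, hb]; gcongr
    have h1 : b * d ≤ a * d - p := by
      have := mul_le_mul_of_nonneg_right hstep hd0.le
      rwa [sub_mul, div_mul_cancel₀ _ hd0.ne'] at this
    rw [div_add' _ _ _ ha0.ne', div_le_div_iff₀ ha0 hb0]
    have h2 : (t ^ 2 * d + a) * b ≤ t ^ 2 * d * a := by
      nlinarith [mul_le_mul_of_nonneg_left h1 (sq_nonneg t), mul_le_mul_of_nonneg_left hba ha0.le]
    calc (t ^ 2 + d⁻¹ * a) * b = ((t ^ 2 * d + a) * b) / d := by field_simp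
      _ ≤ (t ^ 2 * d * a) / d := by gcongr
      _ = t ^ 2 * a := by field_simp

theorem spanResidual_congr {g g' : ℕ → X} {k : ℕ} (h : ∀ i < k, g i = g' i) (x : X) :
    spanResidual g k x = spanResidual g' k x := by
  have hspan : spanFirst g k = spanFirst g' k :=
    congrArg (Submodule.span ℝ) (Set.image_congr h)
  unfold spanResidual
  congr! 3

/-- The sequence obtained by repeatedly applying a selection rule to the current residual. -/
noncomputable def greedySeq (pick : X → X) (f : X) (k : ℕ) : X :=
  pick (spanResidual (fun i => if _ : i < k then greedySeq pick f i else 0) k f)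
termination_by k

theorem greedySeq_eq (pick : X → X) (f : X) (k : ℕ) :
    greedySeq pick f k = pick (spanResidual (greedySeq pick f) k f) := by
  rw [greedySeq]
  exact congrArg pick (spanResidual_congr (fun i hi => by simp [hi]) f)

end SpanFirst

/-- An `ℓ¹` representation of `f` contains an element well correlated with any `r` satisfying
`⟪f, r⟫ = ‖r‖²`. -/
theorem exists_norm_sq_le_tsum_mul_abs_inner {X : Type*} [NormedAddCommGroup X]
    [InnerProductSpace ℝ X] {f r : X} {c : ℕ → ℝ} {g : ℕ → X} (hc : Summable fun i => |c i|)
    (hf : HasSum (fun i => c i • g i) f) (hr : ⟪r, f⟫ = ‖r‖ ^ 2) :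
    ∃ i, ‖r‖ ^ 2 ≤ (∑' i, |c i|) * |⟪r, g i⟫| := by
  by_contra! h
  have hs : HasSum (fun i => c i * ⟪r, g i⟫) (‖r‖ ^ 2) := by
    rw [← hr]
    simpa [inner_smul_right] using hf.mapL (innerSL ℝ r)
  set t := ∑' i, |c i|
  have ht0 : 0 ≤ t := tsum_nonneg fun i => abs_nonneg _
  rcases ht0.eq_or_lt with ht | ht
  · have hz : ∀ i, c i = 0 := fun i => by
      have := hc.le_tsum i fun j _ => abs_nonneg (c j)
      exact abs_nonpos_iff.1 (this.trans ht.ge)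
    have h0 : ‖r‖ ^ 2 = 0 := hs.unique (by simp [hz])
    have := h 0
    rw [h0, ← ht] at this
    simp at this
  · obtain ⟨i, hi⟩ : ∃ i, c i ≠ 0 := by
      by_contra! hz
      simp [t, hz] at ht
    have hlt : ∀ j, |⟪r, g j⟫| < ‖r‖ ^ 2 / t := fun j => by
      rw [lt_div_iff₀ ht, mul_comm]; exact h j
    have hle : ∀ j, c j * ⟪r, g j⟫ ≤ |c j| * (‖r‖ ^ 2 / t) := fun j =>
      (le_abs_self _).trans (by rw [abs_mul]; exact mul_le_mul_of_nonneg_left (hlt j).le (abs_nonneg _))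
    have hsi : c i * ⟪r, g i⟫ < |c i| * (‖r‖ ^ 2 / t) :=
      (le_abs_self _).trans_lt
        (by rw [abs_mul]; exact mul_lt_mul_of_pos_left (hlt i) (abs_pos.2 hi))
    have := hasSum_lt hle hsi hs (hc.hasSum.mul_right (‖r‖ ^ 2 / t))
    rw [mul_div_cancel₀ _ ht.ne'] at this
    exact lt_irrefl _ this

theorem bestNTermError_le_norm_spanResidual {X : Type*} [NormedAddCommGroup X]
    [InnerProductSpace ℝ X] {D : Set X} {g : ℕ → X} (hg : ∀ i, g i ∈ D) (n : ℕ) (f : X) :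
    bestNTermError D n f ≤ ‖spanResidual g n f‖ := by
  have h : (spanFirst g n).starProjection f ∈ Submodule.span ℝ (Set.range fun i : Fin n => g i) := by
    have hrange : (Set.range fun i : Fin n => g i) = g '' {i | i < n} := by
      ext y
      simp [Fin.exists_iff]
    rw [hrange]
    exact Submodule.starProjection_apply_mem (spanFirst g n) f
  obtain ⟨c, hc⟩ := (Submodule.mem_span_range_iff_exists_fun ℝ).1 h
  refine csInf_le ⟨0, ?_⟩ ⟨c, fun i => g i, fun i => hg i, by rw [hc, spanResidual]⟩
  rintro _ ⟨c, g, -, rfl⟩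
  positivity

/-- The arithmetic-geometric mean inequality applied to inverse squares. -/
theorem card_div_sq_le_sum_inv_sq {n : ℕ} (hn : 1 ≤ n) {d : ℕ → ℝ} (hd : ∀ k < n, 0 < d k)
    {q : ℝ} (hq : 0 < q) (h : ∏ k ∈ Finset.range n, d k ≤ q ^ n) :
    n / q ^ 2 ≤ ∑ k ∈ Finset.range n, (d k ^ 2)⁻¹ := by
  have hn0 : (0 : ℝ) < n := by exact_mod_cast hn
  have hnn : (n : ℝ) ≠ 0 := hn0.ne'
  have hprod : 0 < ∏ k ∈ Finset.range n, d k :=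
    Finset.prod_pos fun k hk => hd k (Finset.mem_range.1 hk)
  have amgm := Real.geom_mean_le_arith_mean (Finset.range n) (fun _ => 1) (fun k => (d k ^ 2)⁻¹)
    (fun _ _ => zero_le_one) (by simpa using hn0) (fun k _ => by positivity)
  simp only [Real.rpow_one, Finset.sum_const, Finset.card_range, nsmul_eq_mul, mul_one, one_mul,
    Finset.prod_inv_distrib, Finset.prod_pow] at amgm
  have hlow : (q ^ 2)⁻¹ ≤ (((∏ k ∈ Finset.range n, d k) ^ 2)⁻¹) ^ ((n : ℝ)⁻¹) := by
    have h1 : ((q ^ 2)⁻¹) = (((q ^ 2)⁻¹) ^ n) ^ ((n : ℝ)⁻¹) :=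
      (Real.pow_rpow_inv_natCast (by positivity) (by omega)).symm
    rw [h1]
    refine Real.rpow_le_rpow (by positivity) ?_ (by positivity)
    rw [inv_pow, ← pow_mul, mul_comm, pow_mul]
    gcongr
  have := hlow.trans amgm
  rw [le_div_iff₀ hn0] at this
  rw [div_eq_mul_inv, mul_comm]
  exact this

/-- The bound for one `ℓ¹` representation and one covering. -/
theorem bestNTermError_le_of_rep_of_cover {X : Type*} [NormedAddCommGroup X]
    [InnerProductSpace ℝ X] {D : Set X} {f : X} {n : ℕ} (hn : 1 ≤ n) {a : ℕ → ℝ} {h : ℕ → X}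
    (hh : ∀ i, h i ∈ D) (ha : Summable fun i => |a i|) (hf : HasSum (fun i => a i • h i) f)
    {ε : ℝ} (hε : 0 < ε) {c : Fin (2 ^ n) → X}
    (hcov : symConvexHull D ⊆ ⋃ i, Metric.closedBall (c i) ε) :
    bestNTermError D n f ≤ ((n.factorial : ℝ) * unitBallVol n) ^ ((n : ℝ)⁻¹) / Real.sqrt n *
      (∑' i, |a i|) * ε := by
  set t := ∑' i, |a i|
  have ht : 0 ≤ t := tsum_nonneg fun i => abs_nonneg _
  have hQ : 0 < (n.factorial : ℝ) * unitBallVol n :=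
    mul_pos (by exact_mod_cast n.factorial_pos) (unitBallVol_pos n)
  set q := ((n.factorial : ℝ) * unitBallVol n) ^ ((n : ℝ)⁻¹)
  have hq : 0 < q := Real.rpow_pos_of_pos hQ _
  have hqn : q ^ n = n.factorial * unitBallVol n :=
    Real.rpow_inv_natCast_pow hQ.le (by omega)
  have hn0 : (0 : ℝ) < n := by exact_mod_cast hn
  have hpick : ∀ r : X, ∃ x ∈ D, ⟪r, f⟫ = ‖r‖ ^ 2 → ‖r‖ ^ 2 ≤ t * |⟪r, x⟫| := by
    intro r
    by_cases hr : ⟪r, f⟫ = ‖r‖ ^ 2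
    · obtain ⟨i, hi⟩ := exists_norm_sq_le_tsum_mul_abs_inner ha hf hr
      exact ⟨h i, hh i, fun _ => hi⟩
    · exact ⟨h 0, hh 0, fun h => absurd h hr⟩
  choose pick hpickD hpick using hpick
  set g := greedySeq pick f
  have hg : ∀ k, g k = pick (spanResidual g k f) := greedySeq_eq pick f
  have hgD : ∀ k, g k ∈ D := fun k => hg k ▸ hpickD _
  have hgr : ∀ k, ‖spanResidual g k f‖ ^ 2 ≤ t * |⟪spanResidual g k f, g k⟫| := by
    intro k
    have := hpick (spanResidual g k f)
      (by rw [← inner_spanResidual_right, real_inner_self_eq_norm_sq])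
    rwa [← hg k] at this
  refine (bestNTermError_le_norm_spanResidual hgD n f).trans ?_
  by_cases hr : spanResidual g n f = 0
  · rw [hr, norm_zero]
    positivity
  obtain ⟨hd, hsum⟩ := sum_inv_sq_le_of_greedy hgr n hr
  have hprod := prod_norm_spanResidual_le_of_cover hn hgD hd hε hcov
  rw [← hqn, ← mul_pow] at hprod
  have hfin := (card_div_sq_le_sum_inv_sq hn (fun k hk => norm_pos_iff.2 (hd k hk))
    (mul_pos hq hε) hprod).trans hsum
  have hr0 : 0 < ‖spanResidual g n f‖ := norm_pos_iff.2 hr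
  rw [div_le_div_iff₀ (by positivity) (by positivity)] at hfin
  rw [show q / Real.sqrt n * t * ε = t * (q * ε) / Real.sqrt n by ring,
    le_div_iff₀ (Real.sqrt_pos.2 hn0)]
  refine le_of_sq_le_sq ?_ (by positivity)
  rw [mul_pow, Real.sq_sqrt hn0.le, mul_pow]
  linarith

theorem le_mul_csInf {S : Set ℝ} (hS : S.Nonempty) {x k : ℝ} (hk : 0 ≤ k)
    (h : ∀ s ∈ S, x ≤ k * s) : x ≤ k * sInf S := by
  rcases hk.eq_or_lt with rfl | hk
  · obtain ⟨s, hs⟩ := hS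
    simpa using h s hs
  · rw [← div_le_iff₀' hk]
    exact le_csInf hS fun s hs => (div_le_iff₀' hk).2 (h s hs)

/-- entropy-based bound for the best `n`-term approximation error of
a function of finite variation norm. -/
theorem bestNTermError_le_entropy
    {X : Type*} [NormedAddCommGroup X] [InnerProductSpace ℝ X] [CompleteSpace X]
    (D : Set X) (hD : IsCompact (symConvexHull D))
    (f : X) (hf : HasL1Rep D f) (n : ℕ) (hn : 1 ≤ n) :
    bestNTermError D n f
      ≤ ((n.factorial : ℝ) * unitBallVol n) ^ ((n : ℝ)⁻¹) / Real.sqrt n *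
          varNorm D f * entropyNumber n (symConvexHull D) := by
  have hV := unitBallVol_pos n
  have hcover : {ε : ℝ | 0 < ε ∧ ∃ c : Fin (2 ^ n) → X,
      symConvexHull D ⊆ ⋃ i, Metric.closedBall (c i) ε}.Nonempty := by
    obtain ⟨R, hR, hsub⟩ := hD.isBounded.subset_closedBall_lt 0 0
    exact ⟨R, hR, fun _ => 0, fun x hx => Set.mem_iUnion.2 ⟨0, hsub hx⟩⟩
  have hvar : 0 ≤ varNorm D f := Real.sInf_nonneg (by
    rintro _ ⟨a, h, -, -, -, rfl⟩
    exact tsum_nonneg fun i => abs_nonneg _)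
  refine le_mul_csInf hcover (by positivity) ?_
  rintro ε ⟨hε, c, hcov⟩
  rw [mul_right_comm]
  refine le_mul_csInf ?_ (by positivity) ?_
  · obtain ⟨a, h, hh, ha, hf⟩ := hf
    exact ⟨_, a, h, hh, ha, hf, rfl⟩
  · rintro _ ⟨a, h, hh, ha, hf, rfl⟩
    rw [mul_right_comm]
    exact bestNTermError_le_of_rep_of_cover hn hh ha hf hε hcov
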